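/- Let h : ℝ → ℝ, u : ℝ → ℝ², and x₀ ∈ ℝ. Assume: h is differentiable on a neighborhood of x₀ and its derivative h′ is differentiable at x₀ (so h″(x₀) exists); u is differentiable at x₀; the tangency condition u(x)·(1, h′(x)) = 0 holds for all x in a neighborhood of x₀; and u(x₀)·(h′(x₀), −1) ≠ 0. Then h″(x₀) = (1 + h′(x₀)²) · [u′(x₀)·(1, h′(x₀))] / [u(x₀)·(h′(x₀), −1)]. -/

import Mathlib

/-! Tangency gives `u·(h′, -1) = -(1 + h′²) u₂`, so `u₂ ≠ 0` at `x₀` and hence nearby, where the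
slope is therefore `h′ = -u₁ / u₂`. By the quotient rule `h″` exists and equals
`-(u′·(1, h′)) / u₂`; the first identity eliminates `u₂`. -/

open scoped Topology

theorem mul_sub_eq_neg_of_add_mul_eq_zero {R : Type*} [CommRing R] {a b m : R}
    (h : a + b * m = 0) : a * m - b = -((1 + m ^ 2) * b) := by
  linear_combination m * h

section Slope

variable {𝕜 𝔸 : Type*} [NontriviallyNormedField 𝕜] [NontriviallyNormedField 𝔸] [NormedAlgebra 𝕜 𝔸]

theorem hasDerivAt_of_add_mul_eq_zero {x₀ : 𝕜} {a b p : 𝕜 → 𝔸} {a' b' : 𝔸}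
    (ha : HasDerivAt a a' x₀) (hb : HasDerivAt b b' x₀)
    (h : ∀ᶠ x in 𝓝 x₀, a x + b x * p x = 0) (hne : b x₀ ≠ 0) :
    HasDerivAt p (-(a' + b' * p x₀) / b x₀) x₀ := by
  have hp : p =ᶠ[𝓝 x₀] fun x => -a x / b x := by
    filter_upwards [h, hb.continuousAt.eventually_ne hne] with x hx hbx
    exact (eq_div_iff hbx).2 (by linear_combination hx)
  have hquot : HasDerivAt p ((-a' * b x₀ - -a x₀ * b') / b x₀ ^ 2) x₀ :=
    (ha.fun_neg.fun_div hb hne).congr_of_eventuallyEq hp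
  convert hquot using 1
  rw [div_eq_div_iff hne (pow_ne_zero 2 hne)]
  linear_combination -(b' * b x₀) * h.self_of_nhds

theorem stmt3_general {h h' : 𝕜 → 𝔸} {u : 𝕜 → 𝔸 × 𝔸} {u' : 𝔸 × 𝔸} {x₀ : 𝕜}
    (hderiv : ∀ᶠ x in 𝓝 x₀, HasDerivAt h (h' x) x) (hu : HasDerivAt u u' x₀)
    (htan : ∀ᶠ x in 𝓝 x₀, (u x).1 + (u x).2 * h' x = 0)
    (hTaylor : (u x₀).1 * h' x₀ - (u x₀).2 ≠ 0) :
    HasDerivAt (deriv h) ((1 + h' x₀ ^ 2) *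
      ((u'.1 + u'.2 * h' x₀) / ((u x₀).1 * h' x₀ - (u x₀).2))) x₀ := by
  have hnormal := mul_sub_eq_neg_of_add_mul_eq_zero htan.self_of_nhds
  obtain ⟨hg, hne⟩ : 1 + h' x₀ ^ 2 ≠ 0 ∧ (u x₀).2 ≠ 0 := by
    rwa [hnormal, neg_ne_zero, mul_ne_zero_iff] at hTaylor
  have hu₁ : HasDerivAt (fun x => (u x).1) u'.1 x₀ :=
    (hasFDerivAt_fst (𝕜 := 𝕜) (p := u x₀)).comp_hasDerivAt x₀ hu
  have hu₂ : HasDerivAt (fun x => (u x).2) u'.2 x₀ :=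
    (hasFDerivAt_snd (𝕜 := 𝕜) (p := u x₀)).comp_hasDerivAt x₀ hu
  have hslope : HasDerivAt (deriv h) (-(u'.1 + u'.2 * h' x₀) / (u x₀).2) x₀ :=
    (hasDerivAt_of_add_mul_eq_zero hu₁ hu₂ htan hne).congr_of_eventuallyEq
      (hderiv.mono fun _ hx => hx.deriv)
  convert hslope using 1
  rw [hnormal]
  field_simp

end Slope

/-- Identity (2.29)/(2.66) of the paper: if the velocity trace `u` along the
graph of `h` is tangent to the graph, `u(x)·(1,h′(x)) = 0`, near `x₀`, and the
Taylor-sign factor `u(x₀)·(h′(x₀),−1)` is nonzero, then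
`h″(x₀) = (1 + h′(x₀)²)·[u′(x₀)·(1,h′(x₀))] / [u(x₀)·(h′(x₀),−1)]`. -/
theorem stmt3 (h h' : ℝ → ℝ) (h'' : ℝ) (u : ℝ → ℝ × ℝ) (u' : ℝ × ℝ) (x₀ : ℝ)
    (hderiv : ∀ᶠ x in nhds x₀, HasDerivAt h (h' x) x)
    (hderiv2 : HasDerivAt h' h'' x₀)
    (hu : HasDerivAt u u' x₀)
    (htan : ∀ᶠ x in nhds x₀, (u x).1 * 1 + (u x).2 * h' x = 0)
    (hTaylor : (u x₀).1 * h' x₀ + (u x₀).2 * (-1) ≠ 0) :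
    h'' = (1 + h' x₀ ^ 2) *
      ((u'.1 * 1 + u'.2 * h' x₀) / ((u x₀).1 * h' x₀ + (u x₀).2 * (-1))) := by
  have hderiv_eq : deriv h =ᶠ[𝓝 x₀] h' := hderiv.mono fun _ hx => hx.deriv
  simp only [mul_one, mul_neg_one, ← sub_eq_add_neg] at htan hTaylor ⊢
  exact (hderiv2.congr_of_eventuallyEq hderiv_eq).unique (stmt3_general hderiv hu htan hTaylor)
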